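/- arXiv:1805.06218 — 4 statements merged into one kernel-verified Lean document; each statement's English description precedes it below -/
import Mathlib

section
/- Let A and B be positive definite complex matrices such that s·A ≤ B ≤ t·A for some scalars 0 < s ≤ t with s·t ≥ 1. Then (2/(√s+√t))·(A ∇ B) ≤ A ♯ B and A ♯ B ≤ ((√s+√t)/2)·(A ! B). -/
open Matrix ComplexOrder

/-- Loewner order: `A ≤ B` iff `B - A` is positive semidefinite. -/
def LoewnerLE {n : Type} [Fintype n] (A B : Matrix n n ℂ) : Prop := (B - A).PosSemidef

/-- The positive square root of a (Hermitian) matrix, via the continuous functional calculus. -/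
noncomputable def msqrt {n : Type} [Fintype n] [DecidableEq n] (A : Matrix n n ℂ) :
    Matrix n n ℂ := cfc Real.sqrt A

/-- The arithmetic mean `A ∇ B = (A + B)/2`. -/
noncomputable def amean {n : Type} [Fintype n] [DecidableEq n] (A B : Matrix n n ℂ) :
    Matrix n n ℂ := (2 : ℝ)⁻¹ • (A + B)

/-- The harmonic mean `A ! B = ((A⁻¹ + B⁻¹)/2)⁻¹`. -/
noncomputable def hmean {n : Type} [Fintype n] [DecidableEq n] (A B : Matrix n n ℂ) :
    Matrix n n ℂ := ((2 : ℝ)⁻¹ • (A⁻¹ + B⁻¹))⁻¹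

/-- The geometric mean `A ♯ B = A^(1/2) (A^(-1/2) B A^(-1/2))^(1/2) A^(1/2)`. -/
noncomputable def gmean {n : Type} [Fintype n] [DecidableEq n] (A B : Matrix n n ℂ) :
    Matrix n n ℂ := msqrt A * msqrt ((msqrt A)⁻¹ * B * (msqrt A)⁻¹) * msqrt A

/-- `f : ℝ → ℝ` is operator monotone on `[0,∞)`: it is continuous and nonnegative on `[0,∞)`
and monotone on positive-semidefinite complex matrices of every finite size, with `f` applied
via the continuous functional calculus. -/
def OpMonotone (f : ℝ → ℝ) : Prop :=
  ContinuousOn f (Set.Ici 0) ∧ (∀ x : ℝ, 0 ≤ x → 0 ≤ f x) ∧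
    ∀ (k : Type) [Fintype k] [DecidableEq k] (X Y : Matrix k k ℂ),
      X.PosSemidef → LoewnerLE X Y → LoewnerLE (cfc f X) (cfc f Y)

/-- `g : ℝ → ℝ` is operator monotone decreasing on `(0,∞)`: it is continuous and nonnegative on
`(0,∞)` and antitone on positive-definite complex matrices of every finite size, with `g` applied
via the continuous functional calculus. -/
def OpAntitone (g : ℝ → ℝ) : Prop :=
  ContinuousOn g (Set.Ioi 0) ∧ (∀ x : ℝ, 0 < x → 0 ≤ g x) ∧
    ∀ (k : Type) [Fintype k] [DecidableEq k] (X Y : Matrix k k ℂ),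
      X.PosDef → Y.PosDef → LoewnerLE X Y → LoewnerLE (cfc g Y) (cfc g X)

/-!
Functional calculus turns `(√x - √s) (√t - √x) ≥ 0` on `[s, t]` into an inequality for
`A^(-1/2) B A^(-1/2)`; congruence by `A^(1/2)` gives `√(s t) A + B ≤ (√s + √t) (A ♯ B)`, hence a
bound `k (A ∇ B) ≤ A ♯ B`. The harmonic bound follows from it: `G = A ♯ B` solves the Riccati
equation `G A⁻¹ G = B`, so that `A ! B = G (A ∇ B)⁻¹ G`, and `M ≤ G` implies `G ≤ G M⁻¹ G`.
-/

theorem sqrt_mul_add_le_mul_sqrt {s t x : ℝ} (hs : 0 ≤ s) (hsx : s ≤ x) (hxt : x ≤ t) :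
    √(s * t) + x ≤ (√s + √t) * √x := by
  have hmul : 0 ≤ (√x - √s) * (√t - √x) :=
    mul_nonneg (sub_nonneg.2 (Real.sqrt_le_sqrt hsx)) (sub_nonneg.2 (Real.sqrt_le_sqrt hxt))
  have hx : √x * √x = x := Real.mul_self_sqrt (hs.trans hsx)
  rw [Real.sqrt_mul hs]
  linarith

theorem algebraMap_sqrt_mul_add_le_smul_cfc_sqrt {R : Type*} [Ring R] [StarRing R]
    [TopologicalSpace R] [PartialOrder R] [StarOrderedRing R] [Algebra ℝ R]
    [ContinuousFunctionalCalculus ℝ R IsSelfAdjoint] [NonnegSpectrumClass ℝ R]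
    {a : R} (ha : IsSelfAdjoint a) {s t : ℝ} (hs : 0 ≤ s)
    (hsa : algebraMap ℝ R s ≤ a) (hat : a ≤ algebraMap ℝ R t) :
    algebraMap ℝ R √(s * t) + a ≤ (√s + √t) • cfc Real.sqrt a := by
  have hsx := (algebraMap_le_iff_le_spectrum ha).1 hsa
  have hxt := (le_algebraMap_iff_spectrum_le ha).1 hat
  calc algebraMap ℝ R √(s * t) + a
      = cfc (fun x : ℝ ↦ √(s * t) + x) a := by rw [cfc_const_add _ _ a, cfc_id' ℝ a]
    _ ≤ cfc (fun x : ℝ ↦ (√s + √t) * √x) a :=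
        cfc_mono fun x hx ↦ sqrt_mul_add_le_mul_sqrt hs (hsx x hx) (hxt x hx)
    _ = (√s + √t) • cfc Real.sqrt a := cfc_const_mul _ _ a

section Matrix

open scoped MatrixOrder

variable {n : Type} [Fintype n] [DecidableEq n] {A B : Matrix n n ℂ}

theorem msqrt_isHermitian (A : Matrix n n ℂ) : (msqrt A).IsHermitian :=
  cfc_predicate Real.sqrt A

theorem msqrt_mul_self (hA : A.PosSemidef) : msqrt A * msqrt A = A := by
  have hA' : 0 ≤ A := nonneg_iff_posSemidef.2 hA
  rw [msqrt, ← cfcₙ_eq_cfc, ← CFC.sqrt_eq_real_sqrt A, CFC.sqrt_mul_sqrt_self A]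

theorem isUnit_det_msqrt (hA : A.PosDef) : IsUnit (msqrt A).det := by
  have h : IsUnit (msqrt A * msqrt A).det := by
    rw [msqrt_mul_self hA.posSemidef]
    exact hA.det_pos.ne'.isUnit
  rw [det_mul] at h
  exact isUnit_of_mul_isUnit_left h

theorem inv_msqrt_conj_self (hA : A.PosDef) : (msqrt A)⁻¹ * A * (msqrt A)⁻¹ = 1 := by
  nth_rewrite 2 [← msqrt_mul_self hA.posSemidef]
  rw [nonsing_inv_mul_cancel_left _ _ (isUnit_det_msqrt hA),
    mul_nonsing_inv _ (isUnit_det_msqrt hA)]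

theorem msqrt_conj_inv_msqrt_conj (hA : A.PosDef) (B : Matrix n n ℂ) :
    msqrt A * ((msqrt A)⁻¹ * B * (msqrt A)⁻¹) * msqrt A = B := by
  rw [mul_assoc, nonsing_inv_mul_cancel_right _ _ (isUnit_det_msqrt hA),
    mul_nonsing_inv_cancel_left _ _ (isUnit_det_msqrt hA)]

theorem sqrt_mul_smul_add_le_smul_gmean (hA : A.PosDef) {s t : ℝ} (hs : 0 ≤ s)
    (hsA : s • A ≤ B) (htA : B ≤ t • A) :
    √(s * t) • A + B ≤ (√s + √t) • gmean A B := by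
  set R := msqrt A
  set C := R⁻¹ * B * R⁻¹
  have hR : R.IsHermitian := msqrt_isHermitian A
  have conj_smul (r : ℝ) : R⁻¹ * (r • A) * R⁻¹ = algebraMap ℝ _ r := by
    rw [mul_smul_comm, smul_mul_assoc, inv_msqrt_conj_self hA,
      Algebra.algebraMap_eq_smul_one]
  have hsC : algebraMap ℝ _ s ≤ C :=
    conj_smul s ▸ IsSelfAdjoint.conjugate_le_conjugate hsA hR.inv
  have hCt : C ≤ algebraMap ℝ _ t :=
    conj_smul t ▸ IsSelfAdjoint.conjugate_le_conjugate htA hR.inv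
  have hCsa : IsSelfAdjoint C := .of_nonneg ((algebraMap_nonneg _ hs).trans hsC)
  calc √(s * t) • A + B
      = R * (algebraMap ℝ _ √(s * t) + C) * R := by
        rw [mul_add, add_mul, msqrt_conj_inv_msqrt_conj hA,
          Algebra.algebraMap_eq_smul_one, mul_smul_comm, smul_mul_assoc, mul_one,
          msqrt_mul_self hA.posSemidef]
    _ ≤ R * ((√s + √t) • msqrt C) * R :=
        IsSelfAdjoint.conjugate_le_conjugate
          (algebraMap_sqrt_mul_add_le_smul_cfc_sqrt hCsa hs hsC hCt) hR
    _ = (√s + √t) • gmean A B := by rw [mul_smul_comm, smul_mul_assoc, gmean]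

theorem min_smul_amean_le_gmean (hA : A.PosDef) {s t : ℝ} (hs : 0 < s)
    (hsA : s • A ≤ B) (htA : B ≤ t • A) :
    (2 * min 1 √(s * t) / (√s + √t)) • amean A B ≤ gmean A B := by
  have hc : 0 < √s + √t := by positivity
  have hA0 : 0 ≤ A := nonneg_iff_posSemidef.2 hA.posSemidef
  have hB0 : 0 ≤ B := (smul_nonneg hs.le hA0).trans hsA
  have hsum : min 1 √(s * t) • (A + B) ≤ (√s + √t) • gmean A B :=
    calc min 1 √(s * t) • (A + B)
      _ ≤ √(s * t) • A + (1 : ℝ) • B := by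
          rw [smul_add]
          gcongr
          exacts [min_le_right _ _, min_le_left _ _]
      _ = √(s * t) • A + B := by rw [one_smul]
      _ ≤ (√s + √t) • gmean A B := sqrt_mul_smul_add_le_smul_gmean hA hs.le hsA htA
  calc (2 * min 1 √(s * t) / (√s + √t)) • amean A B
      = (√s + √t)⁻¹ • min 1 √(s * t) • (A + B) := by
        rw [amean, smul_smul, smul_smul]
        congr 1
        field_simp
    _ ≤ gmean A B := (inv_smul_le_iff_of_pos hc).2 hsum

theorem gmean_mul_inv_mul_gmean (hA : A.PosDef) (hB : B.PosSemidef) :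
    gmean A B * A⁻¹ * gmean A B = B := by
  set R := msqrt A
  set C := R⁻¹ * B * R⁻¹
  have hu : IsUnit R.det := isUnit_det_msqrt hA
  have hCpos : C.PosSemidef := by
    simpa only [R, C, (msqrt_isHermitian A).inv.eq] using hB.mul_mul_conjTranspose_same R⁻¹
  calc gmean A B * A⁻¹ * gmean A B
      = R * msqrt C * (R * (R * R)⁻¹ * R) * msqrt C * R := by
        rw [msqrt_mul_self hA.posSemidef]
        simp only [gmean, mul_assoc, R, C]
    _ = R * (msqrt C * msqrt C) * R := by
        rw [Matrix.mul_inv_rev, mul_nonsing_inv_cancel_left _ _ hu, nonsing_inv_mul _ hu]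
        simp only [mul_one, mul_assoc]
    _ = B := by
        rw [msqrt_mul_self hCpos, msqrt_conj_inv_msqrt_conj hA]

theorem hmean_eq_gmean_mul_inv_amean_mul_gmean (hA : A.PosDef) (hB : B.PosDef) :
    hmean A B = gmean A B * (amean A B)⁻¹ * gmean A B := by
  set G := gmean A B
  have hGAG : G * A⁻¹ * G = B := gmean_mul_inv_mul_gmean hA hB.posSemidef
  have hG : IsUnit G.det := by
    have h : IsUnit (G * A⁻¹ * G).det := hGAG ▸ hB.det_pos.ne'.isUnit
    rw [det_mul] at h
    exact isUnit_of_mul_isUnit_right h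
  have hGBG : G * B⁻¹ * G = A := by
    rw [← hGAG, Matrix.mul_inv_rev, Matrix.mul_inv_rev,
      nonsing_inv_nonsing_inv _ hA.det_pos.ne'.isUnit,
      mul_nonsing_inv_cancel_left _ _ hG, nonsing_inv_mul_cancel_right _ _ hG]
  have hamean : amean A B = G * ((2 : ℝ)⁻¹ • (A⁻¹ + B⁻¹)) * G := by
    rw [mul_smul_comm, smul_mul_assoc, mul_add, add_mul, hGAG, hGBG, add_comm, amean]
  rw [hamean, Matrix.mul_inv_rev, Matrix.mul_inv_rev, mul_nonsing_inv_cancel_left _ _ hG,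
    nonsing_inv_mul_cancel_right _ _ hG, hmean]

theorem le_mul_inv_mul_self_of_le {m 𝕜 : Type*} [Fintype m] [DecidableEq m] [RCLike 𝕜]
    {M G : Matrix m m 𝕜} (hM : M.PosDef) (hMG : M ≤ G) : G ≤ G * M⁻¹ * G := by
  have hu : IsUnit M.det := (isUnit_iff_isUnit_det M).1 hM.isUnit
  have hGM : (G - M).PosSemidef := hMG
  have hdiff : G * M⁻¹ * G - G = (G - M) + (G - M) * M⁻¹ * (G - M) := by
    simp only [sub_mul, mul_sub, mul_nonsing_inv _ hu, nonsing_inv_mul_cancel_right _ _ hu, one_mul]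
    abel
  have hconj : ((G - M) * M⁻¹ * (G - M)).PosSemidef := by
    simpa only [hGM.isHermitian.eq] using hM.inv.posSemidef.mul_mul_conjTranspose_same (G - M)
  rw [le_iff, hdiff]
  exact hGM.add hconj

theorem gmean_le_inv_smul_hmean (hA : A.PosDef) (hB : B.PosDef) {k : ℝ} (hk : 0 < k)
    (h : k • amean A B ≤ gmean A B) : gmean A B ≤ k⁻¹ • hmean A B := by
  have hM : (amean A B).PosDef := (hA.add hB).smul (by positivity)
  have hinv : (k • amean A B)⁻¹ = k⁻¹ • (amean A B)⁻¹ := by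
    apply inv_eq_right_inv
    rw [smul_mul_smul_comm, mul_inv_cancel₀ hk.ne', one_smul,
      mul_nonsing_inv _ hM.det_pos.ne'.isUnit]
  calc gmean A B ≤ gmean A B * (k • amean A B)⁻¹ * gmean A B :=
        le_mul_inv_mul_self_of_le (hM.smul hk) h
    _ = k⁻¹ • hmean A B := by
        rw [hinv, mul_smul_comm, smul_mul_assoc, hmean_eq_gmean_mul_inv_amean_mul_gmean hA hB]

end Matrix

theorem polya_szego_lemma_st_ge_one_general {n : Type} [Fintype n] [DecidableEq n]
    (A B : Matrix n n ℂ) (hA : A.PosDef) (hB : B.PosDef) (s t : ℝ) (hs : 0 < s) (ht : 0 < t)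
    (hsA : LoewnerLE (s • A) B) (htA : LoewnerLE B (t • A)) :
    LoewnerLE ((2 * min 1 √(s * t) / (√s + √t)) • amean A B) (gmean A B) ∧
      LoewnerLE (gmean A B) (((√s + √t) / (2 * min 1 √(s * t))) • hmean A B) := by
  have hk : 0 < 2 * min 1 √(s * t) / (√s + √t) := by positivity
  have hamean := min_smul_amean_le_gmean hA hs hsA htA
  exact ⟨hamean, inv_div (2 * min 1 √(s * t)) _ ▸ gmean_le_inv_smul_hmean hA hB hk hamean⟩

theorem polya_szego_lemma_st_ge_one {n : Type} [Fintype n] [DecidableEq n]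
    (A B : Matrix n n ℂ) (hA : A.PosDef) (hB : B.PosDef)
    (s t : ℝ) (hs : 0 < s) (hst : s ≤ t) (h1 : 1 ≤ s * t)
    (hsA : LoewnerLE (s • A) B) (htA : LoewnerLE B (t • A)) :
    LoewnerLE ((2 / (Real.sqrt s + Real.sqrt t)) • amean A B) (gmean A B) ∧
      LoewnerLE (gmean A B) (((Real.sqrt s + Real.sqrt t) / 2) • hmean A B) := by
  simpa only [min_eq_left (Real.one_le_sqrt.2 h1), mul_one] using
    polya_szego_lemma_st_ge_one_general A B hA hB s t hs (hs.trans_le hst) hsA htA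
end

section
/- Let f : ℝ → ℝ be operator monotone on [0,∞). Then for every real α ≥ 1 and every real t ≥ 0, one has f(α·t) ≤ α·f(t). -/
open Matrix ComplexOrder

/-!
Let `p` be the projection onto the unit vector `(√a, √b)`, where `a + b = 1`. The matrix
`X = x p + y (1 - p)` has upper left entry `a x + b y`, and
`f(X) = f(x) p + f(y) (1 - p)` has upper left entry `a f(x) + b f(y)`. For every
`s > a x + b y` and `c` large enough, `X ≤ diag(s, c)`, so monotonicity of `f` on `2 × 2` matrices
gives `a f(x) + b f(y) ≤ f(s)`. Letting `a` vary, one may take `s = a x + b y`, so `f` is concave on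
`[0, ∞)`. The bound is concavity between `0` and `α t`.
-/

open Filter Topology

section StarProjection

variable {A : Type*} [Ring A] [StarRing A] [TopologicalSpace A] [Algebra ℝ A]
  [ContinuousFunctionalCalculus ℝ A IsSelfAdjoint] [ContinuousMap.UniqueHom ℝ A]

lemma cfc_smul_add_smul_one_sub (f : ℝ → ℝ) {p : A} (hp : IsStarProjection p) (x y : ℝ) :
    cfc f (x • p + y • (1 - p)) = f x • p + f y • (1 - p) := by
  have hsa : IsSelfAdjoint p := hp.isSelfAdjoint
  have hspec : spectrum ℝ p ⊆ {0, 1} := hp.isIdempotentElem.spectrum_subset ℝ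
  have hfin : (spectrum ℝ p).Finite := (Set.toFinite {0, 1}).subset hspec
  have cfc_affine (u v : ℝ) : cfc (fun z ↦ u * z + v * (1 - z)) p = u • p + v • (1 - p) := by
    rw [cfc_add .., cfc_const_mul .., cfc_const_mul .., cfc_sub .., cfc_id' .., cfc_const_one ..]
  rw [← cfc_affine x y, ← cfc_affine (f x) (f y),
    ← cfc_comp' f _ p (hg := (hfin.image _).continuousOn f)]
  refine cfc_congr fun z hz ↦ ?_
  rcases hspec hz with rfl | rfl <;> simp

end StarProjection

lemma isStarProjection_vecMulVec_self_star {n R : Type*} [Fintype n] [Semiring R] [StarRing R]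
    {v : n → R} (hv : star v ⬝ᵥ v = 1) :
    IsStarProjection (vecMulVec v (star v)) where
  isIdempotentElem := by
    rw [IsIdempotentElem, vecMulVec_mul_vecMulVec, hv, one_smul]
  isSelfAdjoint := by
    rw [IsSelfAdjoint, star_eq_conjTranspose, conjTranspose_vecMulVec, star_star]

section Matrix

open scoped MatrixOrder

variable {𝕜 : Type*} [RCLike 𝕜]

lemma diag_apply_le_diag_apply {n : Type*} {M N : Matrix n n 𝕜} (h : M ≤ N) (i : n) :
    M i i ≤ N i i :=
  sub_nonneg.mp (Matrix.le_iff.mp h).diag_nonneg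

lemma cfc_diagonal_fin_two (f : ℝ → ℝ) (x y : ℝ) :
    cfc f (diagonal ![(x : 𝕜), (y : 𝕜)]) = diagonal ![(f x : 𝕜), (f y : 𝕜)] := by
  let e : Matrix (Fin 2) (Fin 2) 𝕜 := diagonal ![1, 0]
  have he : IsStarProjection e := by
    constructor <;> ext i j <;> fin_cases i <;> fin_cases j <;> simp [e, Matrix.mul_apply]
  have diagonal_eq (u v : ℝ) : diagonal ![(u : 𝕜), (v : 𝕜)] = u • e + v • (1 - e) := by
    ext i j
    fin_cases i <;> fin_cases j <;> simp [e, RCLike.real_smul_eq_coe_mul]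
  rw [diagonal_eq, diagonal_eq, cfc_smul_add_smul_one_sub f he]

lemma exists_le_diagonal_of_re_apply_zero_lt {X : Matrix (Fin 2) (Fin 2) 𝕜} (hX : X.IsHermitian)
    {s : ℝ} (hs : RCLike.re (X 0 0) < s) : ∃ c : ℝ, X ≤ diagonal ![(s : 𝕜), (c : 𝕜)] := by
  obtain ⟨ε, hε, rfl⟩ : ∃ ε : ℝ, 0 < ε ∧ RCLike.re (X 0 0) + ε = s :=
    ⟨s - RCLike.re (X 0 0), sub_pos.mpr hs, by ring⟩
  let w : Fin 2 → 𝕜 := ![(ε : 𝕜), -X 1 0]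
  have hε0 : (ε : 𝕜) ≠ 0 := RCLike.ofReal_ne_zero.mpr hε.ne'
  have h01 : star (X 1 0) = X 0 1 := hX.apply 0 1
  -- The lower right entry is the one for which the difference from `X` has rank one.
  have hw : diagonal ![((RCLike.re (X 0 0) + ε : ℝ) : 𝕜),
      ((RCLike.re (X 1 1) + ε⁻¹ * ‖X 1 0‖ ^ 2 : ℝ) : 𝕜)] - X =
        ε⁻¹ • vecMulVec w (star w) := by
    ext i j
    rw [Matrix.smul_apply, vecMulVec_apply]
    fin_cases i <;> fin_cases j <;>
      simp [w, RCLike.real_smul_eq_coe_mul, hX.coe_re_apply_self, RCLike.mul_conj, mul_left_comm,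
        hε0, ← h01]
  exact ⟨_, Matrix.le_iff.mpr <| hw ▸
    (posSemidef_vecMulVec_self_star w).smul (inv_nonneg.mpr hε.le)⟩

lemma add_mul_le_of_monotoneOn_cfc {f : ℝ → ℝ}
    (hf : MonotoneOn (cfc f : Matrix (Fin 2) (Fin 2) 𝕜 → _) (Set.Ici 0))
    {x y a b s : ℝ} (hx : 0 ≤ x) (hy : 0 ≤ y) (ha : 0 ≤ a) (hb : 0 ≤ b) (hab : a + b = 1)
    (hs : a * x + b * y < s) : a * f x + b * f y ≤ f s := by
  let v : Fin 2 → 𝕜 := ![(√a : 𝕜), (√b : 𝕜)]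
  let p := vecMulVec v (star v)
  have hp : IsStarProjection p := isStarProjection_vecMulVec_self_star <| by
    simp [v, dotProduct, ← RCLike.ofReal_mul, Real.mul_self_sqrt, ha, hb, ← RCLike.ofReal_add,
      hab]
  have re_apply_zero (u w : ℝ) : RCLike.re ((u • p + w • (1 - p)) 0 0) = a * u + b * w := by
    have hp00 : p 0 0 = (a : 𝕜) := by
      simp [p, v, ← RCLike.ofReal_mul, Real.mul_self_sqrt, ha]
    obtain rfl : b = 1 - a := by linarith
    simp only [Matrix.add_apply, Matrix.sub_apply, Matrix.smul_apply, one_apply_eq, hp00, map_add,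
      map_sub, RCLike.smul_re, RCLike.ofReal_re, RCLike.one_re]
    ring
  have hX : 0 ≤ x • p + y • (1 - p) :=
    add_nonneg (smul_nonneg hx hp.nonneg) (smul_nonneg hy hp.one_sub_nonneg)
  obtain ⟨c, hc⟩ := exists_le_diagonal_of_re_apply_zero_lt
    (Matrix.nonneg_iff_posSemidef.mp hX).isHermitian ((re_apply_zero x y).trans_lt hs)
  have hfX := RCLike.re_le_re (diag_apply_le_diag_apply (hf hX (hX.trans hc) hc) 0)
  rw [cfc_smul_add_smul_one_sub f hp, re_apply_zero, cfc_diagonal_fin_two] at hfX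
  simpa using hfX

theorem concaveOn_of_monotoneOn_cfc {f : ℝ → ℝ}
    (hf : MonotoneOn (cfc f : Matrix (Fin 2) (Fin 2) 𝕜 → _) (Set.Ici 0)) :
    ConcaveOn ℝ (Set.Ici 0) f := by
  refine LinearOrder.concaveOn_of_lt (convex_Ici 0) fun x hx y hy hxy a b ha hb hab ↦ ?_
  obtain rfl : b = 1 - a := by linarith
  -- Moving weight towards the smaller point `x` makes the inequality on the arguments strict.
  have h_le (c : ℝ) (hc : c ∈ Set.Ioo a 1) :
      c * f x + (1 - c) * f y ≤ f (a * x + (1 - a) * y) :=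
    add_mul_le_of_monotoneOn_cfc hf hx hy (ha.trans hc.1).le (sub_nonneg.mpr hc.2.le) (by ring)
      (by nlinarith [hc.1])
  have h_lim : Tendsto (fun c ↦ c * f x + (1 - c) * f y) (𝓝[>] a)
      (𝓝 (a * f x + (1 - a) * f y)) :=
    (Continuous.tendsto (by fun_prop) a).mono_left nhdsWithin_le_nhds
  exact le_of_tendsto h_lim (mem_of_superset (Ioo_mem_nhdsGT (sub_pos.mp hb)) h_le)

end Matrix

lemma map_smul_le_of_concaveOn {𝕜 E β : Type*} [Field 𝕜] [LinearOrder 𝕜] [IsStrictOrderedRing 𝕜]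
    [AddCommMonoid E] [Module 𝕜 E] [AddCommGroup β] [PartialOrder β] [IsOrderedAddMonoid β]
    [Module 𝕜 β] [PosSMulMono 𝕜 β] {s : Set E} {f : E → β} (hf : ConcaveOn 𝕜 s f) (h0 : 0 ∈ s)
    (hf0 : 0 ≤ f 0) {α : 𝕜} (hα : 1 ≤ α) {x : E} (hx : α • x ∈ s) : f (α • x) ≤ α • f x := by
  have hα0 : 0 < α := zero_lt_one.trans_le hα
  have hα1 : 0 ≤ 1 - α⁻¹ := sub_nonneg.mpr (inv_le_one_of_one_le₀ hα)
  rw [← inv_smul_le_iff_of_pos hα0]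
  calc α⁻¹ • f (α • x) ≤ α⁻¹ • f (α • x) + (1 - α⁻¹) • f 0 :=
        le_add_of_nonneg_right (smul_nonneg hα1 hf0)
    _ ≤ f (α⁻¹ • α • x + (1 - α⁻¹) • 0) :=
        hf.2 hx h0 (inv_nonneg.mpr hα0.le) hα1 (add_sub_cancel _ _)
    _ = f x := by rw [inv_smul_smul₀ hα0.ne', smul_zero, add_zero]

open scoped MatrixOrder in
theorem opMonotone_scalar_bound_general {𝕜 : Type*} [RCLike 𝕜] {f : ℝ → ℝ}
    (hf : MonotoneOn (cfc f : Matrix (Fin 2) (Fin 2) 𝕜 → _) (Set.Ici 0)) (hf0 : 0 ≤ f 0)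
    {α : ℝ} (hα : 1 ≤ α) {t : ℝ} (ht : 0 ≤ t) : f (α * t) ≤ α * f t :=
  map_smul_le_of_concaveOn (concaveOn_of_monotoneOn_cfc hf) Set.self_mem_Ici hf0 hα
    (mul_nonneg (zero_le_one.trans hα) ht)

open scoped MatrixOrder in
lemma OpMonotone.monotoneOn_cfc {f : ℝ → ℝ} (hf : OpMonotone f) (k : Type) [Fintype k]
    [DecidableEq k] : MonotoneOn (cfc f : Matrix k k ℂ → _) (Set.Ici 0) :=
  fun X hX Y _ hXY ↦ Matrix.le_iff.mpr <|
    hf.2.2 k X Y (Matrix.nonneg_iff_posSemidef.mp hX) (Matrix.le_iff.mp hXY)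

theorem opMonotone_scalar_bound (f : ℝ → ℝ) (hf : OpMonotone f)
    (α : ℝ) (hα : 1 ≤ α) (t : ℝ) (ht : 0 ≤ t) :
    f (α * t) ≤ α * f t :=
  opMonotone_scalar_bound_general (hf.monotoneOn_cfc (Fin 2)) (hf.2.1 0 le_rfl) hα ht
end

section
/- Let g : ℝ → ℝ be operator monotone decreasing on (0,∞). Then for every real α ≥ 1 and every real t > 0, one has g(α·t) ≥ (1/α)·g(t). -/
open Matrix ComplexOrder

/-!
Matrix antitonicity makes `x ↦ g x⁻¹` concave, and a nonnegative concave function `h` on `(0,∞)`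
satisfies `h (x / α) ≥ h x / α` for `α ≥ 1`.

For the concavity, let `v` be the unit vector with entries `√(w i)` and let `D` be the diagonal
matrix with entries `d i`. If `m` is below the harmonic mean of the `d i` with weights `w i`, some
positive definite `X = s + (m - s) v vᴴ` lies below `D`: this is the Cauchy-Schwarz inequality.
As `X v = m v`, evaluating `g(D) ≤ g(X)` at `v` gives `∑ w i g(d i) ≤ g m`. With weights `c` and
`1 - c` at the points `t` and `L`, where `c < t / m` and `L` is large, nonnegativity of `g L` gives
`c g t ≤ g m`.
-/

open Filter Topology

/-- Matrix antitonicity of a fixed order: `g`, applied via the continuous functional calculus,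
reverses the Loewner order on the positive definite matrices indexed by `n`. This is the notion of
an `n`-monotone (decreasing) function on `(0,∞)`; no regularity of `g` is included. -/
def MatrixAntitone (n : Type) [Fintype n] [DecidableEq n] (g : ℝ → ℝ) : Prop :=
  ∀ X Y : Matrix n n ℂ, X.PosDef → Y.PosDef → LoewnerLE X Y → LoewnerLE (cfc g Y) (cfc g X)

theorem exists_pos_sub_mul_sum_div_sub_le_one {ι : Type*} [Fintype ι] {w d : ι → ℝ}
    (hd : ∀ i, 0 < d i) {m : ℝ} (hm : 0 < m) (h : m * ∑ i, w i / d i < 1) :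
    ∃ s, 0 < s ∧ s < m ∧ (∀ i, s < d i) ∧ (m - s) * ∑ i, w i / (d i - s) ≤ 1 := by
  have hcont : ContinuousAt (fun s ↦ (m - s) * ∑ i, w i / (d i - s)) 0 := by
    have hd_ne (i : ι) : d i - 0 ≠ 0 := by simpa using (hd i).ne'
    fun_prop (disch := exact hd_ne _)
  have hlt : ∀ᶠ s in 𝓝 (0 : ℝ), (m - s) * ∑ i, w i / (d i - s) < 1 :=
    hcont.eventually_lt_const (by simpa using h)
  have hnear := ((eventually_lt_nhds hm).and
    ((eventually_all.2 fun i ↦ eventually_lt_nhds (hd i)).and hlt)).filter_mono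
      (nhdsWithin_le_nhds (s := Set.Ioi 0))
  obtain ⟨s, hs, hsm, hsd, hsum⟩ := (eventually_mem_nhdsWithin.and hnear).exists
  exact ⟨s, hs, hsm, hsd, hsum.le⟩

section RCLike

variable {𝕜 n : Type*} [RCLike 𝕜]

theorem isHermitian_diagonal_ofReal [DecidableEq n] (d : n → ℝ) :
    (diagonal (fun i ↦ (d i : 𝕜))).IsHermitian :=
  isHermitian_diagonal_of_self_adjoint _ (funext fun i ↦ RCLike.conj_ofReal (d i))

variable [Fintype n]

theorem norm_star_dotProduct_sq_le {e : n → ℝ} (he : ∀ i, 0 < e i) (v x : n → 𝕜) :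
    ‖star v ⬝ᵥ x‖ ^ 2 ≤ (∑ i, ‖v i‖ ^ 2 / e i) * ∑ i, e i * ‖x i‖ ^ 2 := by
  calc ‖star v ⬝ᵥ x‖ ^ 2 ≤ (∑ i, ‖v i‖ * ‖x i‖) ^ 2 := by
        gcongr
        simpa [dotProduct] using norm_sum_le Finset.univ fun i ↦ star v i * x i
    _ ≤ (∑ i, ‖v i‖ ^ 2 / e i) * ∑ i, e i * ‖x i‖ ^ 2 := Finset.sum_sq_le_sum_mul_sum_of_sq_le_mul _
        (fun i _ ↦ div_nonneg (sq_nonneg _) (he i).le)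
        (fun i _ ↦ mul_nonneg (he i).le (sq_nonneg _))
        fun i _ ↦ by rw [← mul_assoc, div_mul_cancel₀ _ (he i).ne', mul_pow]

theorem star_dotProduct_self_eq_ofReal (v : n → 𝕜) :
    star v ⬝ᵥ v = ((∑ i, ‖v i‖ ^ 2 : ℝ) : 𝕜) := by
  simp [dotProduct, RCLike.conj_mul]

variable [DecidableEq n]

theorem cfc_mulVec_of_mulVec_eq_smul {A : Matrix n n 𝕜} (hA : A.IsHermitian) (f : ℝ → ℝ)
    {μ : ℝ} {v : n → 𝕜} (hv : A *ᵥ v = μ • v) : cfc f A *ᵥ v = f μ • v := by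
  have hA' : IsSelfAdjoint A := hA
  have hcont (h : ℝ → ℝ) : ContinuousOn h (spectrum ℝ A) := A.finite_real_spectrum.continuousOn h
  -- The value `q μ = 0` comes from division by zero, but it is multiplied by `x - μ`.
  let q : ℝ → ℝ := fun x ↦ (f x - f μ) / (x - μ)
  have hf : f = fun x ↦ f μ + q x * (x - μ) := by
    ext x
    rcases eq_or_ne x μ with rfl | hx
    · simp
    · simp [q, sub_ne_zero.2 hx]
  have hfactor : cfc f A = algebraMap ℝ _ (f μ) + cfc q A * (A - algebraMap ℝ _ μ) := by
    conv_lhs => rw [hf]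
    rw [cfc_const_add _ _ A (hcont _), cfc_mul _ _ A (hcont _) (hcont _),
      cfc_sub _ _ A (hcont _) (hcont _), cfc_id' ℝ A, cfc_const μ A]
  have hker : (A - algebraMap ℝ _ μ) *ᵥ v = 0 := by
    rw [sub_mulVec, hv, Algebra.algebraMap_eq_smul_one, smul_mulVec, one_mulVec, sub_self]
  rw [hfactor, add_mulVec, ← mulVec_mulVec, hker, mulVec_zero, add_zero,
    Algebra.algebraMap_eq_smul_one, smul_mulVec, one_mulVec]

theorem cfc_diagonal_ofReal (f : ℝ → ℝ) (d : n → ℝ) :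
    cfc f (diagonal (fun i ↦ (d i : 𝕜))) = diagonal (fun i ↦ (f (d i) : 𝕜)) := by
  refine ext_of_mulVec_single fun i ↦ ?_
  rw [cfc_mulVec_of_mulVec_eq_smul (isHermitian_diagonal_ofReal d) f (μ := d i)] <;>
    simp [← Pi.single_smul, RCLike.real_smul_eq_coe_mul]

theorem star_dotProduct_diagonal_mulVec (d : n → ℝ) (v : n → 𝕜) :
    star v ⬝ᵥ diagonal (fun i ↦ (d i : 𝕜)) *ᵥ v = ((∑ i, d i * ‖v i‖ ^ 2 : ℝ) : 𝕜) := by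
  simp only [dotProduct, mulVec_diagonal, Pi.star_apply, RCLike.star_def]
  push_cast
  refine Finset.sum_congr rfl fun i _ ↦ ?_
  rw [← RCLike.conj_mul]
  ring

theorem posSemidef_diagonal_sub_smul_vecMulVec {e : n → ℝ} (he : ∀ i, 0 < e i) {r : ℝ}
    (hr : 0 ≤ r) {v : n → 𝕜} (hv : r * ∑ i, ‖v i‖ ^ 2 / e i ≤ 1) :
    (diagonal (fun i ↦ (e i : 𝕜)) - r • vecMulVec v (star v)).PosSemidef := by
  have hrank : (r • vecMulVec v (star v)).PosSemidef := (posSemidef_vecMulVec_self_star v).smul hr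
  refine .of_dotProduct_mulVec_nonneg ((isHermitian_diagonal_ofReal e).sub hrank.1) fun x ↦ ?_
  have hform : star x ⬝ᵥ (r • vecMulVec v (star v)) *ᵥ x = ((r * ‖star v ⬝ᵥ x‖ ^ 2 : ℝ) : 𝕜) := by
    rw [smul_mulVec, vecMulVec_mulVec, dotProduct_smul, op_smul_eq_smul, dotProduct_smul,
      RCLike.real_smul_eq_coe_mul, star_dotProduct, smul_eq_mul, norm_star, ← starRingEnd_apply,
      RCLike.conj_mul, RCLike.ofReal_mul, RCLike.ofReal_pow]
  rw [sub_mulVec, dotProduct_sub, star_dotProduct_diagonal_mulVec, hform, ← RCLike.ofReal_sub,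
    RCLike.ofReal_nonneg, sub_nonneg]
  calc r * ‖star v ⬝ᵥ x‖ ^ 2 ≤ r * ((∑ i, ‖v i‖ ^ 2 / e i) * ∑ i, e i * ‖x i‖ ^ 2) := by
        gcongr
        exact norm_star_dotProduct_sq_le he v x
    _ = (r * ∑ i, ‖v i‖ ^ 2 / e i) * ∑ i, e i * ‖x i‖ ^ 2 := (mul_assoc _ _ _).symm
    _ ≤ ∑ i, e i * ‖x i‖ ^ 2 := mul_le_of_le_one_left
        (Finset.sum_nonneg fun i _ ↦ mul_nonneg (he i).le (sq_nonneg _)) hv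

theorem exists_posDef_le_diagonal_of_mulVec_eq_smul {v : n → 𝕜} (hv : ∑ i, ‖v i‖ ^ 2 = 1)
    {d : n → ℝ} (hd : ∀ i, 0 < d i) {m : ℝ} (hm : 0 < m) (h : m * ∑ i, ‖v i‖ ^ 2 / d i < 1) :
    ∃ X : Matrix n n 𝕜, X.PosDef ∧ X *ᵥ v = m • v ∧
      (diagonal (fun i ↦ (d i : 𝕜)) - X).PosSemidef := by
  obtain ⟨s, hs, hsm, hsd, hsum⟩ := exists_pos_sub_mul_sum_div_sub_le_one hd hm h
  refine ⟨s • 1 + (m - s) • vecMulVec v (star v), ?_, ?_, ?_⟩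
  · exact (PosDef.one.smul hs).add_posSemidef
      ((posSemidef_vecMulVec_self_star v).smul (sub_nonneg.2 hsm.le))
  · have hvv : star v ⬝ᵥ v = 1 := by
      rw [star_dotProduct_self_eq_ofReal, hv, RCLike.ofReal_one]
    simp only [add_mulVec, smul_mulVec, one_mulVec, vecMulVec_mulVec, hvv, MulOpposite.op_one,
      one_smul, ← add_smul, add_sub_cancel]
  · have hshift : diagonal (fun i ↦ (d i : 𝕜)) - s • 1 =
        diagonal (fun i ↦ ((d i - s : ℝ) : 𝕜)) := by
      rw [← diagonal_one, ← diagonal_smul, diagonal_sub]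
      simp [RCLike.real_smul_eq_coe_mul]
    rw [← sub_sub, hshift]
    exact posSemidef_diagonal_sub_smul_vecMulVec (fun i ↦ sub_pos.2 (hsd i))
      (sub_nonneg.2 hsm.le) hsum

theorem sum_mul_norm_sq_le_of_posSemidef_cfc_sub {g : ℝ → ℝ} {A : Matrix n n 𝕜}
    (hA : A.IsHermitian) {μ : ℝ} {v : n → 𝕜} (hv : A *ᵥ v = μ • v) {d : n → ℝ}
    (h : (cfc g A - cfc g (diagonal fun i ↦ (d i : 𝕜))).PosSemidef) :
    ∑ i, g (d i) * ‖v i‖ ^ 2 ≤ g μ * ∑ i, ‖v i‖ ^ 2 := by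
  have hform := h.dotProduct_mulVec_nonneg v
  rwa [sub_mulVec, dotProduct_sub, cfc_mulVec_of_mulVec_eq_smul hA g hv, cfc_diagonal_ofReal,
    star_dotProduct_diagonal_mulVec, dotProduct_smul, star_dotProduct_self_eq_ofReal,
    RCLike.real_smul_eq_coe_mul, ← RCLike.ofReal_mul, sub_nonneg, RCLike.ofReal_le_ofReal] at hform

end RCLike

namespace MatrixAntitone

/-- Concavity of `x ↦ g x⁻¹` in a form that needs no continuity: `m` stays strictly below the
weighted harmonic mean of the points `d i`. -/
theorem sum_mul_le {n : Type} [Fintype n] [DecidableEq n] {g : ℝ → ℝ} (hg : MatrixAntitone n g)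
    {w d : n → ℝ} (hw : ∀ i, 0 ≤ w i) (hw_sum : ∑ i, w i = 1) (hd : ∀ i, 0 < d i) {m : ℝ}
    (hm : 0 < m) (h : m * ∑ i, w i / d i < 1) : ∑ i, w i * g (d i) ≤ g m := by
  let v : n → ℂ := fun i ↦ (√(w i) : ℝ)
  have hv (i : n) : ‖v i‖ ^ 2 = w i := by simp [v, Real.sq_sqrt (hw i)]
  obtain ⟨X, hX, hXv, hXd⟩ := exists_posDef_le_diagonal_of_mulVec_eq_smul (v := v)
    (by simpa only [hv] using hw_sum) hd hm (by simpa only [hv] using h)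
  have hD : (diagonal fun i ↦ (d i : ℂ)).PosDef :=
    .diagonal fun i ↦ Complex.zero_lt_real.2 (hd i)
  simpa [hv, hw_sum, mul_comm] using
    sum_mul_norm_sq_le_of_posSemidef_cfc_sub hX.1 hXv (hg X _ hX hD hXd)

theorem mul_le_of_mul_lt {g : ℝ → ℝ} (hg : MatrixAntitone (Fin 2) g)
    (hnonneg : ∀ x, 0 < x → 0 ≤ g x) {c m t : ℝ} (hc : 0 < c) (hc_one : c ≤ 1) (hm : 0 < m)
    (hcm : c * m < t) : c * g t ≤ g m := by
  have ht : 0 < t := (mul_pos hc hm).trans hcm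
  have hgap : 0 < t - c * m := sub_pos.2 hcm
  let L := m * t / (t - c * m)
  have hL : 0 < L := div_pos (mul_pos hm ht) hgap
  have hmean : m * ∑ i, ![c, 1 - c] i / ![t, L] i < 1 := by
    calc m * ∑ i, ![c, 1 - c] i / ![t, L] i = 1 - c * (t - c * m) / t := by
          simp only [L, Fin.sum_univ_two, cons_val_zero, cons_val_one]
          field_simp
          ring
      _ < 1 := sub_lt_self 1 (div_pos (mul_pos hc hgap) ht)
  have hJensen : c * g t + (1 - c) * g L ≤ g m := by
    simpa using hg.sum_mul_le (w := ![c, 1 - c]) (d := ![t, L])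
      (by simp [Fin.forall_fin_two, hc.le, hc_one]) (by simp) (by simp [Fin.forall_fin_two, ht, hL])
      hm hmean
  have := mul_nonneg (sub_nonneg.2 hc_one) (hnonneg L hL)
  linarith

end MatrixAntitone

theorem opAntitone_scalar_bound_general (g : ℝ → ℝ) (hnonneg : ∀ x, 0 < x → 0 ≤ g x)
    (hg : MatrixAntitone (Fin 2) g) (α : ℝ) (hα : 1 ≤ α) (t : ℝ) (ht : 0 < t) :
    (1 / α) * g t ≤ g (α * t) := by
  have hα0 : 0 < α := one_pos.trans_le hα
  have hbound : ∀ c ∈ Set.Ioo 0 (1 / α), c * g t ≤ g (α * t) := fun c ⟨hc, hcα⟩ ↦ by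
    have hc_one : c ≤ 1 := hcα.le.trans ((div_le_one hα0).2 hα)
    have hcm : c * (α * t) < t := by
      rw [← mul_assoc]
      exact mul_lt_of_lt_one_left ht ((lt_div_iff₀ hα0).1 hcα)
    exact hg.mul_le_of_mul_lt hnonneg hc hc_one (mul_pos hα0 ht) hcm
  have hlim : Tendsto (· * g t) (𝓝[<] (1 / α)) (𝓝 (1 / α * g t)) :=
    ((continuous_mul_const (g t)).tendsto _).mono_left nhdsWithin_le_nhds
  exact le_of_tendsto hlim (eventually_of_mem (Ioo_mem_nhdsLT (by positivity)) hbound)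

theorem opAntitone_scalar_bound (g : ℝ → ℝ) (hg : OpAntitone g)
    (α : ℝ) (hα : 1 ≤ α) (t : ℝ) (ht : 0 < t) :
    (1 / α) * g t ≤ g (α * t) :=
  opAntitone_scalar_bound_general g hg.2.1 (hg.2.2 (Fin 2)) α hα t ht
end

section
/- Let Φ be a positive linear map from n×n to m×m complex matrices, let f : ℝ → ℝ be operator monotone on [0,∞), and let A, B be positive definite n×n complex matrices with s·A ≤ B ≤ t·A for some scalars 0 < s ≤ t with s·t ≥ 1. Then (Φ(f(A)) + Φ(f(B)))/2 ≤ ((√s+√t)/2)²·Φ(f(A ! B)). -/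
open Matrix ComplexOrder

/-!
For an isometry `V` one has `Vᴴ f(X) V ≤ f(Vᴴ X V)`: the matrix `X` lies below a matrix `Y` which
commutes with the projection `V Vᴴ` and whose compression by `V` is `(1 + ε) Vᴴ X V`; apply
monotonicity and let `ε → 0`. Hence `f` is operator concave and `f(c X) ≤ c f(X)` for `c ≥ 1`, so
with `K = ((√s + √t) / 2) ^ 2 ≥ 1`,
`f(A) ∇ f(B) ≤ f(A ∇ B) ≤ f(K (A ! B)) ≤ K f(A ! B)`.
The middle step is the Kantorovich-type inequality `A ∇ B ≤ K (A ! B)`, which congruence reduces to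
`A = 1` and thus to a scalar inequality on `[s, t]`.
-/

section

open scoped MatrixOrder Topology

section FunctionalCalculus

variable {𝕜 k l : Type*} [RCLike 𝕜] [Fintype k] [DecidableEq k] [Fintype l] [DecidableEq l]

lemma exists_polynomial_eval_eq {F : Type*} [Field F] (f : F → F) {S : Set F} (hS : S.Finite) :
    ∃ p : Polynomial F, ∀ x ∈ S, p.eval x = f x := by
  classical
  exact ⟨Lagrange.interpolate hS.toFinset id f, fun _ hx =>
    Lagrange.eval_interpolate_at_node f Function.injective_id.injOn (hS.mem_toFinset.2 hx)⟩

lemma aeval_mul_eq_mul_aeval {R S : Type*} [CommSemiring R] [Semiring S] [Algebra R S]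
    {X : Matrix l l S} {Y : Matrix k k S} {V : Matrix l k S} (h : X * V = V * Y)
    (p : Polynomial R) :
    Polynomial.aeval X p * V = V * Polynomial.aeval Y p := by
  induction p using Polynomial.induction_on' with
  | add p q hp hq => simp only [map_add, Matrix.add_mul, Matrix.mul_add, hp, hq]
  | monomial j a =>
    have hpow : X ^ j * V = V * Y ^ j := by
      induction j with
      | zero => simp only [pow_zero, Matrix.one_mul, Matrix.mul_one]
      | succ j ih => rw [pow_succ, pow_succ', Matrix.mul_assoc, h, ← Matrix.mul_assoc, ih,
          Matrix.mul_assoc, ← pow_succ', ← pow_succ]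
    simp only [Polynomial.aeval_monomial, ← Algebra.smul_def, Matrix.smul_mul, Matrix.mul_smul,
      hpow]

lemma cfc_mul_eq_mul_cfc {X : Matrix l l 𝕜} {Y : Matrix k k 𝕜} {V : Matrix l k 𝕜}
    (hX : X.IsHermitian) (hY : Y.IsHermitian) (h : X * V = V * Y) (f : ℝ → ℝ) :
    cfc f X * V = V * cfc f Y := by
  obtain ⟨p, hp⟩ :=
    exists_polynomial_eval_eq f (X.finite_real_spectrum.union Y.finite_real_spectrum)
  have hfX : cfc f X = Polynomial.aeval X p := by
    rw [← cfc_polynomial p X hX.isSelfAdjoint]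
    exact cfc_congr fun x hx => (hp x (Or.inl hx)).symm
  have hfY : cfc f Y = Polynomial.aeval Y p := by
    rw [← cfc_polynomial p Y hY.isSelfAdjoint]
    exact cfc_congr fun x hx => (hp x (Or.inr hx)).symm
  rw [hfX, hfY, aeval_mul_eq_mul_aeval h]

lemma cfc_fromBlocks_diagonal {A : Matrix k k 𝕜} {B : Matrix l l 𝕜} (hA : A.IsHermitian)
    (hB : B.IsHermitian) (f : ℝ → ℝ) :
    cfc f (fromBlocks A 0 0 B) = fromBlocks (cfc f A) 0 0 (cfc f B) := by
  have hAB : (fromBlocks A 0 0 B).IsHermitian := hA.fromBlocks conjTranspose_zero hB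
  have hleft : cfc f (fromBlocks A 0 0 B) * (fromRows 1 0 : Matrix (k ⊕ l) k 𝕜) =
      fromRows (cfc f A) 0 := by
    rw [cfc_mul_eq_mul_cfc hAB hA (by simp [fromBlocks_mul_fromRows, fromRows_mul])]
    simp only [fromRows_mul, Matrix.one_mul, Matrix.zero_mul]
  have hright : cfc f (fromBlocks A 0 0 B) * (fromRows 0 1 : Matrix (k ⊕ l) l 𝕜) =
      fromRows 0 (cfc f B) := by
    rw [cfc_mul_eq_mul_cfc hAB hB (by simp [fromBlocks_mul_fromRows, fromRows_mul])]
    simp only [fromRows_mul, Matrix.one_mul, Matrix.zero_mul]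
  calc cfc f (fromBlocks A 0 0 B)
      = cfc f (fromBlocks A 0 0 B) * fromCols (fromRows 1 0) (fromRows 0 1) := by
        rw [fromCols_fromRows_eq_fromBlocks, fromBlocks_one, Matrix.mul_one]
    _ = fromBlocks (cfc f A) 0 0 (cfc f B) := by
        rw [mul_fromCols, hleft, hright, fromCols_fromRows_eq_fromBlocks]

lemma tendsto_cfc_of_tendsto {ι : Type*} {L : Filter ι} {F : ι → ℝ → ℝ} {f : ℝ → ℝ}
    {A : Matrix k k 𝕜} (h : ∀ x ∈ spectrum ℝ A, Filter.Tendsto (F · x) L (𝓝 (f x))) :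
    Filter.Tendsto (fun i => cfc (F i) A) L (𝓝 (cfc f A)) := by
  refine tendsto_cfc_fun ?_ (.of_forall fun i => A.finite_real_spectrum.continuousOn (F i))
  refine Metric.tendstoUniformlyOn_iff.2 fun ε hε => ?_
  refine (Filter.eventually_all_finite A.finite_real_spectrum).2 fun x hx => ?_
  simpa only [dist_comm] using Metric.tendsto_nhds.1 (h x hx) ε hε

end FunctionalCalculus

section LoewnerOrder

variable {𝕜 k l : Type*} [RCLike 𝕜]

open scoped Matrix.Norms.L2Operator in
lemma orderClosedTopology_matrix [Finite k] : OrderClosedTopology (Matrix k k ℂ) := by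
  classical
  cases nonempty_fintype k
  infer_instance

lemma conjTranspose_mul_mul_le_conjTranspose_mul_mul [Finite k] [Fintype l]
    {X Y : Matrix l l 𝕜} (h : X ≤ Y) (V : Matrix l k 𝕜) : Vᴴ * X * V ≤ Vᴴ * Y * V := by
  rw [Matrix.le_iff, ← Matrix.sub_mul, ← Matrix.mul_sub]
  exact (Matrix.le_iff.1 h).conjTranspose_mul_mul_same V

lemma conjTranspose_mul_mul_le_iff [Fintype l] [DecidableEq l] {X Y G : Matrix l l 𝕜}
    (hG : IsUnit G) : Gᴴ * X * G ≤ Gᴴ * Y * G ↔ X ≤ Y := by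
  rw [Matrix.le_iff, ← Matrix.sub_mul, ← Matrix.mul_sub]
  exact IsUnit.posSemidef_star_left_conjugate_iff hG

lemma posSemidef_fromBlocks_diagonal [Finite k] [Finite l] {A : Matrix k k 𝕜}
    {B : Matrix l l 𝕜} (hA : A.PosSemidef) (hB : B.PosSemidef) :
    (fromBlocks A 0 0 B).PosSemidef := by
  classical
  cases nonempty_fintype k
  cases nonempty_fintype l
  obtain ⟨a, rfl⟩ := CStarAlgebra.nonneg_iff_eq_star_mul_self.mp hA.nonneg
  obtain ⟨b, rfl⟩ := CStarAlgebra.nonneg_iff_eq_star_mul_self.mp hB.nonneg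
  simpa [fromBlocks_conjTranspose, fromBlocks_multiply, star_eq_conjTranspose] using
    posSemidef_conjTranspose_mul_self (fromBlocks a 0 0 b)

-- The difference of the two sides is `Wᴴ X W` with `W = √ε P - √ε⁻¹ (1 - P)`.
lemma le_smul_compression_add_smul_compression [Fintype l] [DecidableEq l] {X P : Matrix l l 𝕜}
    (hX : X.PosSemidef) (hP : P.IsHermitian) {ε : ℝ} (hε : 0 < ε) :
    X ≤ (1 + ε) • (P * X * P) + (1 + ε⁻¹) • ((1 - P) * X * (1 - P)) := by
  have hW : (√ε • P - √ε⁻¹ • (1 - P)).IsHermitian :=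
    (hP.smul (.all _)).sub ((isHermitian_one.sub hP).smul (.all _))
  have hsq : √ε * √ε = ε := Real.mul_self_sqrt hε.le
  have hsq_inv : √ε⁻¹ * √ε⁻¹ = ε⁻¹ := Real.mul_self_sqrt (inv_pos.2 hε).le
  have hcross : √ε * √ε⁻¹ = 1 := by
    rw [← Real.sqrt_mul hε.le, mul_inv_cancel₀ hε.ne', Real.sqrt_one]
  have hdiff : (1 + ε) • (P * X * P) + (1 + ε⁻¹) • ((1 - P) * X * (1 - P)) - X =
      (√ε • P - √ε⁻¹ • (1 - P))ᴴ * X * (√ε • P - √ε⁻¹ • (1 - P)) := by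
    rw [hW.eq]
    simp only [sub_mul, mul_sub, smul_mul_assoc, mul_smul_comm, one_mul, mul_one, smul_sub,
      smul_smul, hsq, hsq_inv, hcross, mul_comm √ε⁻¹ √ε]
    module
  rw [Matrix.le_iff, hdiff]
  exact hX.conjTranspose_mul_mul_same _

lemma tendsto_cfc_one_add_smul [Fintype k] [DecidableEq k] {f : ℝ → ℝ}
    (hf : ContinuousOn f (Set.Ici 0)) {Z : Matrix k k 𝕜} (hZ : Z.PosSemidef) :
    Filter.Tendsto (fun ε : ℝ => cfc f ((1 + ε) • Z)) (𝓝[>] 0) (𝓝 (cfc f Z)) := by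
  have hcomp (ε : ℝ) : cfc f ((1 + ε) • Z) = cfc (fun x => f ((1 + ε) * x)) Z :=
    (cfc_comp_const_mul (1 + ε) f Z ((Z.finite_real_spectrum.image _).continuousOn f)
      hZ.isHermitian.isSelfAdjoint).symm
  simp only [hcomp]
  refine tendsto_cfc_of_tendsto fun x hx => ?_
  have hx0 : 0 ≤ x := spectrum_nonneg_of_nonneg hZ.nonneg hx
  refine (hf x hx0).tendsto.comp (tendsto_nhdsWithin_iff.2 ⟨?_, ?_⟩)
  · have hcont : Continuous fun ε : ℝ => (1 + ε) * x := by fun_prop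
    simpa using (hcont.tendsto 0).mono_left nhdsWithin_le_nhds
  · filter_upwards [self_mem_nhdsWithin] with ε (hε : 0 < ε)
    exact Set.mem_Ici.2 (by positivity)

end LoewnerOrder

namespace OpMonotone

variable {k l : Type} [Fintype k] [DecidableEq k] [Fintype l] [DecidableEq l] {f : ℝ → ℝ}

lemma cfc_le_cfc (hf : OpMonotone f) {X Y : Matrix k k ℂ} (hX : 0 ≤ X) (hXY : X ≤ Y) :
    cfc f X ≤ cfc f Y :=
  hf.2.2 k X Y hX.posSemidef hXY

theorem conjTranspose_mul_cfc_mul_le (hf : OpMonotone f) {X : Matrix l l ℂ} (hX : X.PosSemidef)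
    {V : Matrix l k ℂ} (hV : Vᴴ * V = 1) : Vᴴ * cfc f X * V ≤ cfc f (Vᴴ * X * V) := by
  have hZ := hX.conjTranspose_mul_mul_same V
  have : OrderClosedTopology (Matrix k k ℂ) := orderClosedTopology_matrix
  refine ge_of_tendsto (tendsto_cfc_one_add_smul hf.1 hZ) ?_
  filter_upwards [self_mem_nhdsWithin] with ε (hε : 0 < ε)
  let P := V * Vᴴ
  have hPV : P * V = V := by rw [Matrix.mul_assoc, hV, Matrix.mul_one]
  have hQV : (1 - P) * V = 0 := by rw [Matrix.sub_mul, Matrix.one_mul, hPV, sub_self]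
  let Y := (1 + ε) • (P * X * P) + (1 + ε⁻¹) • ((1 - P) * X * (1 - P))
  have hXY : X ≤ Y :=
    le_smul_compression_add_smul_compression hX (isHermitian_mul_conjTranspose_self V) hε
  have hY : Y.IsHermitian := (hX.nonneg.trans hXY).posSemidef.isHermitian
  have hYV : Y * V = V * ((1 + ε) • (Vᴴ * X * V)) := by
    simp only [Y, Matrix.add_mul, Matrix.smul_mul, Matrix.mul_assoc, hPV, hQV, Matrix.mul_zero,
      smul_zero, add_zero, Matrix.mul_smul, P]
  calc Vᴴ * cfc f X * V ≤ Vᴴ * cfc f Y * V :=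
        conjTranspose_mul_mul_le_conjTranspose_mul_mul (hf.cfc_le_cfc hX.nonneg hXY) V
    _ = cfc f ((1 + ε) • (Vᴴ * X * V)) := by
        rw [Matrix.mul_assoc, cfc_mul_eq_mul_cfc hY (hZ.isHermitian.smul (.all _)) hYV,
          ← Matrix.mul_assoc, hV, Matrix.one_mul]

-- Compress `A ⊕ B` by the isometry `x ↦ (√a x, √b x)`.
theorem concaveOn_cfc (hf : OpMonotone f) :
    ConcaveOn ℝ (Set.Ici (0 : Matrix k k ℂ)) (cfc f) := by
  refine ⟨convex_Ici 0, fun A hA B hB a b ha hb hab => ?_⟩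
  have hA : A.PosSemidef := hA.posSemidef
  have hB : B.PosSemidef := hB.posSemidef
  set V : Matrix (k ⊕ k) k ℂ := fromRows (√a • 1) (√b • 1)
  have hcompress (C D : Matrix k k ℂ) : Vᴴ * fromBlocks C 0 0 D * V = a • C + b • D := by
    simp [V, conjTranspose_fromRows_eq_fromCols_conjTranspose, Matrix.mul_assoc,
      fromBlocks_mul_fromRows, fromCols_mul_fromRows, smul_smul, Real.mul_self_sqrt, ha, hb]
  have hV : Vᴴ * V = 1 := by
    simpa only [fromBlocks_one, Matrix.mul_one, ← add_smul, hab, one_smul] using hcompress 1 1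
  simpa only [cfc_fromBlocks_diagonal hA.isHermitian hB.isHermitian, hcompress] using
    hf.conjTranspose_mul_cfc_mul_le (posSemidef_fromBlocks_diagonal hA hB) hV

lemma cfc_smul_le_smul_cfc (hf : OpMonotone f) {H : Matrix k k ℂ} (hH : 0 ≤ H) {c : ℝ}
    (hc : 1 ≤ c) : cfc f (c • H) ≤ c • cfc f H := by
  have hc0 : 0 < c := zero_lt_one.trans_le hc
  have hcinv : 0 ≤ 1 - c⁻¹ := sub_nonneg.2 (inv_le_one_of_one_le₀ hc)
  have hf0 : 0 ≤ cfc f (0 : Matrix k k ℂ) :=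
    cfc_nonneg fun x hx => hf.2.1 x (spectrum_nonneg_of_nonneg le_rfl hx)
  refine (inv_smul_le_iff_of_pos hc0).1 ?_
  calc c⁻¹ • cfc f (c • H) ≤ c⁻¹ • cfc f (c • H) + (1 - c⁻¹) • cfc f 0 :=
        le_add_of_nonneg_right (smul_nonneg hcinv hf0)
    _ ≤ cfc f (c⁻¹ • c • H + (1 - c⁻¹) • 0) :=
        hf.concaveOn_cfc.2 (smul_nonneg hc0.le hH) Set.self_mem_Ici (inv_nonneg.2 hc0.le) hcinv
          (add_sub_cancel _ _)
    _ = cfc f H := by rw [inv_smul_smul₀ hc0.ne', smul_zero, add_zero]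

lemma amean_cfc_le_cfc_amean (hf : OpMonotone f) {A B : Matrix k k ℂ} (hA : 0 ≤ A)
    (hB : 0 ≤ B) : amean (cfc f A) (cfc f B) ≤ cfc f (amean A B) := by
  simpa only [amean, smul_add] using
    hf.concaveOn_cfc.2 hA hB (inv_nonneg.2 zero_le_two) (inv_nonneg.2 zero_le_two) (by norm_num)

end OpMonotone

section Means

variable {n : Type} [Fintype n] [DecidableEq n]

lemma exists_eq_conjTranspose_mul_mul {R : Type*} [CommRing R] [StarRing R] {G : Matrix n n R}
    (hG : IsUnit G) (B : Matrix n n R) : ∃ C, B = Gᴴ * C * G := by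
  have hdet := (isUnit_iff_isUnit_det G).1 hG
  have hdet' := (isUnit_iff_isUnit_det Gᴴ).1 ((isUnit_conjTranspose G).2 hG)
  exact ⟨Gᴴ⁻¹ * (B * G⁻¹), by
    rw [mul_nonsing_inv_cancel_left _ _ hdet', nonsing_inv_mul_cancel_right _ _ hdet]⟩

lemma amean_conj (A B G : Matrix n n ℂ) :
    amean (Gᴴ * A * G) (Gᴴ * B * G) = Gᴴ * amean A B * G := by
  simp only [amean, Matrix.mul_smul, Matrix.smul_mul, Matrix.mul_add, Matrix.add_mul]

lemma hmean_conj (A B : Matrix n n ℂ) {G : Matrix n n ℂ} (hG : IsUnit G) :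
    hmean (Gᴴ * A * G) (Gᴴ * B * G) = Gᴴ * hmean A B * G := by
  have hdet := (isUnit_iff_isUnit_det G).1 hG
  have hdet' := (isUnit_iff_isUnit_det Gᴴ).1 ((isUnit_conjTranspose G).2 hG)
  have hfactor : (2 : ℝ)⁻¹ • ((Gᴴ * A * G)⁻¹ + (Gᴴ * B * G)⁻¹) =
      G⁻¹ * ((2 : ℝ)⁻¹ • (A⁻¹ + B⁻¹)) * Gᴴ⁻¹ := by
    simp only [Matrix.mul_inv_rev, Matrix.mul_smul, Matrix.smul_mul, Matrix.mul_add,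
      Matrix.add_mul, Matrix.mul_assoc]
  rw [hmean, hfactor, Matrix.mul_inv_rev, Matrix.mul_inv_rev, nonsing_inv_nonsing_inv _ hdet,
    nonsing_inv_nonsing_inv _ hdet', ← Matrix.mul_assoc, hmean]

lemma hmean_posDef {A B : Matrix n n ℂ} (hA : A.PosDef) (hB : B.PosDef) : (hmean A B).PosDef :=
  ((hA.inv.add hB.inv).smul (inv_pos.2 zero_lt_two)).inv

lemma amean_one_eq_cfc {C : Matrix n n ℂ} (hC : C.IsHermitian) :
    amean 1 C = cfc (fun x : ℝ => 2⁻¹ * (1 + x)) C := by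
  rw [cfc_const_mul .., cfc_const_add .., cfc_id' ℝ C hC.isSelfAdjoint, map_one, amean]

lemma hmean_one_eq_cfc {C : Matrix n n ℂ} (hC : C.PosDef) :
    hmean 1 C = cfc (fun x : ℝ => (2⁻¹ * (1 + x⁻¹))⁻¹) C := by
  have hcont (g : ℝ → ℝ) : ContinuousOn g (spectrum ℝ C) := C.finite_real_spectrum.continuousOn g
  have hC' : IsSelfAdjoint C := hC.isHermitian
  have hinv : cfc (fun x : ℝ => x⁻¹) C = C⁻¹ := by
    rw [cfc_ringInverse_id C hC.isUnit, nonsing_inv_eq_ringInverse]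
  have hne : ∀ x ∈ spectrum ℝ C, 2⁻¹ * (1 + x⁻¹) ≠ 0 := fun x hx => by
    have : 0 < x := hC.isStrictlyPositive.spectrum_pos hx
    positivity
  rw [cfc_inv (fun x : ℝ => 2⁻¹ * (1 + x⁻¹)) C hne (hcont _), cfc_const_mul _ _ _ (hcont _),
    cfc_const_add _ _ _ (hcont _), hinv, hmean, nonsing_inv_eq_ringInverse, map_one, inv_one]

lemma amean_one_le_smul_hmean_one {C : Matrix n n ℂ} (hC : C.PosDef) {K : ℝ}
    (hK : ∀ x ∈ spectrum ℝ C, 2⁻¹ * (1 + x) ≤ K * (2⁻¹ * (1 + x⁻¹))⁻¹) :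
    amean 1 C ≤ K • hmean 1 C := by
  have hcont (g : ℝ → ℝ) : ContinuousOn g (spectrum ℝ C) := C.finite_real_spectrum.continuousOn g
  rw [amean_one_eq_cfc hC.isHermitian, hmean_one_eq_cfc hC, ← cfc_const_mul _ _ _ (hcont _)]
  exact cfc_mono hK (hcont _) (hcont _)

theorem amean_le_smul_hmean {A B : Matrix n n ℂ} (hA : A.PosDef) (hB : B.PosDef) {s t K : ℝ}
    (hsA : s • A ≤ B) (htA : B ≤ t • A)
    (hK : ∀ x ∈ Set.Icc s t, 2⁻¹ * (1 + x) ≤ K * (2⁻¹ * (1 + x⁻¹))⁻¹) :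
    amean A B ≤ K • hmean A B := by
  obtain ⟨G, hG, hAG⟩ : ∃ G, IsUnit G ∧ A = Gᴴ * G :=
    CStarAlgebra.isStrictlyPositive_iff_eq_star_mul_self.1 hA.isStrictlyPositive
  obtain ⟨C, rfl⟩ : ∃ C, B = Gᴴ * C * G := exists_eq_conjTranspose_mul_mul hG B
  obtain rfl : A = Gᴴ * 1 * G := by rwa [Matrix.mul_one]
  have hC : C.PosDef := (IsUnit.posDef_star_left_conjugate_iff hG).1 hB
  have hsC : algebraMap ℝ _ s ≤ C := by
    rw [Algebra.algebraMap_eq_smul_one, ← conjTranspose_mul_mul_le_iff hG]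
    simpa only [Matrix.mul_smul, Matrix.smul_mul] using hsA
  have htC : C ≤ algebraMap ℝ _ t := by
    rw [Algebra.algebraMap_eq_smul_one, ← conjTranspose_mul_mul_le_iff hG]
    simpa only [Matrix.mul_smul, Matrix.smul_mul] using htA
  have hmeans : amean 1 C ≤ K • hmean 1 C := amean_one_le_smul_hmean_one hC fun x hx =>
    hK x ⟨(algebraMap_le_iff_le_spectrum hC.isHermitian).1 hsC x hx,
      (le_algebraMap_iff_spectrum_le hC.isHermitian).1 htC x hx⟩
  simpa only [amean_conj, hmean_conj _ _ hG, Matrix.mul_smul, Matrix.smul_mul] using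
    conjTranspose_mul_mul_le_conjTranspose_mul_mul hmeans G

end Means

section ScalarMeans

variable {s t : ℝ}

lemma add_add_two_le_sqrt_add_sqrt_sq (hs : 0 ≤ s) (ht : 0 ≤ t) (hst : 1 ≤ s * t) :
    s + t + 2 ≤ (√s + √t) ^ 2 := by
  have hprod : 1 ≤ √s * √t := by rwa [← Real.sqrt_mul hs, Real.one_le_sqrt]
  rw [add_sq, Real.sq_sqrt hs, Real.sq_sqrt ht]
  linarith

lemma one_le_sqrt_add_sqrt_div_two_sq (hs : 0 ≤ s) (ht : 0 ≤ t) (hst : 1 ≤ s * t) :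
    1 ≤ ((√s + √t) / 2) ^ 2 := by
  have hsum : 2 ≤ s + t := by nlinarith [sq_nonneg (s - t)]
  linarith [add_add_two_le_sqrt_add_sqrt_sq hs ht hst, div_pow (√s + √t) 2 2]

-- `K := ((√s + √t) / 2) ^ 2` satisfies `4 K ≥ s + t + 2`, and `(x - s) (t - x) ≥ 0` gives
-- `(1 + x) ^ 2 ≤ (s + t + 2) x`.
lemma scalar_amean_one_le_mul_scalar_hmean_one (hs : 0 < s) (hst : 1 ≤ s * t) {x : ℝ}
    (hx : x ∈ Set.Icc s t) :
    2⁻¹ * (1 + x) ≤ ((√s + √t) / 2) ^ 2 * (2⁻¹ * (1 + x⁻¹))⁻¹ := by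
  obtain ⟨hsx, hxt⟩ := hx
  have hx0 : 0 < x := hs.trans_le hsx
  have hK := add_add_two_le_sqrt_add_sqrt_sq hs.le (hx0.le.trans hxt) hst
  have hquad : (1 + x) ^ 2 ≤ (√s + √t) ^ 2 * x := by
    nlinarith [mul_nonneg (sub_nonneg.2 hsx) (sub_nonneg.2 hxt)]
  have hmean : 2⁻¹ * (1 + x⁻¹) = (1 + x) / (2 * x) := by field_simp; ring
  rw [hmean, inv_div, ← mul_div_assoc, le_div_iff₀ (by positivity)]
  linarith

end ScalarMeans

theorem OpMonotone.amean_cfc_le_smul_cfc_hmean {n : Type} [Fintype n] [DecidableEq n] {f : ℝ → ℝ}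
    (hf : OpMonotone f) {A B : Matrix n n ℂ} (hA : A.PosDef) (hB : B.PosDef) {K : ℝ} (hK : 1 ≤ K)
    (hAB : amean A B ≤ K • hmean A B) :
    amean (cfc f A) (cfc f B) ≤ K • cfc f (hmean A B) := by
  have hA0 := hA.posSemidef.nonneg
  have hB0 := hB.posSemidef.nonneg
  calc amean (cfc f A) (cfc f B) ≤ cfc f (amean A B) := hf.amean_cfc_le_cfc_amean hA0 hB0
    _ ≤ cfc f (K • hmean A B) :=
        hf.cfc_le_cfc (smul_nonneg (inv_nonneg.2 zero_le_two) (add_nonneg hA0 hB0)) hAB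
    _ ≤ K • cfc f (hmean A B) :=
        hf.cfc_smul_le_smul_cfc (hmean_posDef hA hB).posSemidef.nonneg hK

end

theorem polya_szego_monotone_st_ge_one {n m : Type} [Fintype n] [DecidableEq n] [Fintype m] [DecidableEq m]
    (Φ : Matrix n n ℂ →ₗ[ℂ] Matrix m m ℂ)
    (hΦ : ∀ X : Matrix n n ℂ, X.PosSemidef → (Φ X).PosSemidef)
    (f : ℝ → ℝ) (hf : OpMonotone f)
    (A B : Matrix n n ℂ) (hA : A.PosDef) (hB : B.PosDef)
    (s t : ℝ) (hs : 0 < s) (hst : s ≤ t) (h1 : 1 ≤ s * t)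
    (hsA : LoewnerLE (s • A) B) (htA : LoewnerLE B (t • A)) :
    LoewnerLE ((2 : ℝ)⁻¹ • (Φ (cfc f A) + Φ (cfc f B)))
      ((((Real.sqrt s + Real.sqrt t) / 2) ^ 2) • Φ (cfc f (hmean A B))) := by
  have ht : 0 ≤ t := hs.le.trans hst
  have hmeans : LoewnerLE (amean A B) (((√s + √t) / 2) ^ 2 • hmean A B) :=
    amean_le_smul_hmean hA hB hsA htA fun _ => scalar_amean_one_le_mul_scalar_hmean_one hs h1
  have hcfc : LoewnerLE (amean (cfc f A) (cfc f B)) (((√s + √t) / 2) ^ 2 • cfc f (hmean A B)) :=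
    hf.amean_cfc_le_smul_cfc_hmean hA hB (one_le_sqrt_add_sqrt_div_two_sq hs.le ht h1) hmeans
  simpa only [LoewnerLE, amean, map_sub, map_add, LinearMap.map_smul_of_tower] using hΦ _ hcfc
end
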